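/- Let m, c, k, ca, ω be positive reals with ω² > 2k/m − ca·(2c + ca)/m², set s = iω, and let z₁, z₂ : ℝ → ℂ. Assume: z₁ and z₂ are twice differentiable with continuous first and second derivatives on [0,∞); z₁, z₁', z₂, z₂', z₂'' are all of exponential order a for some real a with a < 0; z₁(0) = 0, z₂(0) = 0 and z₂'(0) = 0; the differential equation z₂''(t) + ((c + ca)/m)·z₂'(t) + (k/m)·z₂(t) = (c/m)·z₁'(t) + (k/m)·z₁(t) holds for all t ≥ 0; and L[z₁](s) ≠ 0. Then ‖L[z₂](s) / L[z₁](s)‖ < 1, i.e., the platoon with the non-autonomous leader-velocity-communication controller is stable at frequency ω. -/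

import Mathlib

open MeasureTheory

/-- The Laplace transform of `f : ℝ → ℂ` at `s : ℂ`:  `∫ t in (0,∞), e^{-s t} f t`. -/
noncomputable def laplace (f : ℝ → ℂ) (s : ℂ) : ℂ :=
  ∫ t in Set.Ioi (0 : ℝ), Complex.exp (-(s * t)) * f t

/-- `f` is of exponential order `a`: there is `M > 0` with `‖f t‖ ≤ M e^{a t}` for `t ≥ 0`. -/
def ExpOrder (f : ℝ → ℂ) (a : ℝ) : Prop :=
  ∃ M > 0, ∀ t ≥ (0 : ℝ), ‖f t‖ ≤ M * Real.exp (a * t)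



lemma lap_norm_exp (w t : ℝ) : ‖Complex.exp (-(Complex.I * (w : ℂ) * t))‖ = 1 := by
  rw [Complex.norm_exp]; simp

lemma lap_integrable (f : ℝ → ℂ) (a w : ℝ) (ha : a < 0) (hf : ContinuousOn f (Set.Ici 0))
    (he : ExpOrder f a) :
    IntegrableOn (fun t : ℝ => Complex.exp (-(Complex.I * (w : ℂ) * t)) * f t) (Set.Ioi 0) := by
  obtain ⟨M, hM, hb⟩ := he
  refine Integrable.mono' ((integrableOn_exp_mul_Ioi ha 0).const_mul M) ?_ ?_
  · refine ContinuousOn.aestronglyMeasurable ?_ measurableSet_Ioi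
    refine ContinuousOn.mul (Continuous.continuousOn (by fun_prop)) (hf.mono Set.Ioi_subset_Ici_self)
  · refine (ae_restrict_iff' measurableSet_Ioi).2 (Filter.Eventually.of_forall fun t ht => ?_)
    rw [norm_mul, lap_norm_exp, one_mul]
    exact hb t (le_of_lt ht)

lemma lap_deriv (f f' : ℝ → ℂ) (a w : ℝ) (ha : a < 0)
    (hd : ∀ t ∈ Set.Ici (0 : ℝ), HasDerivWithinAt f (f' t) (Set.Ici 0) t)
    (hf' : ContinuousOn f' (Set.Ici 0))
    (he : ExpOrder f a) (he' : ExpOrder f' a) (h0 : f 0 = 0) :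
    laplace f' (Complex.I * (w : ℂ)) = Complex.I * (w : ℂ) * laplace f (Complex.I * (w : ℂ)) := by
  have hf : ContinuousOn f (Set.Ici 0) := fun t ht => (hd t ht).continuousWithinAt
  have i1 := lap_integrable f a w ha hf he
  have i2 := lap_integrable f' a w ha hf' he'
  have i3 := i1.const_mul (Complex.I * (w : ℂ))
  have key := integral_Ioi_of_hasDerivAt_of_tendsto (a := (0 : ℝ)) (m := (0 : ℂ))
    (f := fun t : ℝ => Complex.exp (-(Complex.I * (w : ℂ) * t)) * f t)
    (f' := fun t : ℝ => Complex.exp (-(Complex.I * (w : ℂ) * t)) * f' t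
      - Complex.I * (w : ℂ) * (Complex.exp (-(Complex.I * (w : ℂ) * t)) * f t)) ?_ ?_ ?_ ?_
  · rw [integral_sub i2 i3, integral_const_mul, h0, mul_zero, sub_zero, sub_eq_zero] at key
    exact key
  · exact ContinuousWithinAt.mul (Continuous.continuousWithinAt (by fun_prop)) (hf 0 Set.self_mem_Ici)
  · intro t ht
    have h1 : HasDerivAt f (f' t) t := (hd t (Set.mem_Ici.2 (le_of_lt (Set.mem_Ioi.1 ht)))).hasDerivAt (Ici_mem_nhds ht)
    have h2 : HasDerivAt (fun t : ℝ => -(Complex.I * (w : ℂ) * (t : ℂ))) (-(Complex.I * (w : ℂ) * 1)) t :=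
      ((Complex.ofRealCLM.hasDerivAt (x := t)).const_mul (Complex.I * (w : ℂ))).neg
    have h3 := h2.cexp.mul h1
    refine HasDerivAt.congr_deriv h3 ?_
    ring
  · exact i2.sub i3
  · obtain ⟨M, hM, hb⟩ := he
    have hlim : Filter.Tendsto (fun t : ℝ => M * Real.exp (a * t)) Filter.atTop (nhds 0) := by
      have : Filter.Tendsto (fun t : ℝ => Real.exp (a * t)) Filter.atTop (nhds 0) :=
        Real.tendsto_exp_atBot.comp (Filter.tendsto_id.const_mul_atTop_of_neg ha)
      simpa using this.const_mul M
    refine squeeze_zero_norm' ?_ hlim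
    filter_upwards [Filter.eventually_ge_atTop (0 : ℝ)] with t ht
    rw [norm_mul, lap_norm_exp, one_mul]
    exact hb t ht

theorem stmt15 (m c k ca ω : ℝ) (hm : 0 < m) (hc : 0 < c) (hk : 0 < k) (hca : 0 < ca) (hω : 0 < ω)
    (hfreq : 2 * k / m - ca * (2 * c + ca) / m ^ 2 < ω ^ 2)
    (s : ℂ) (hs : s = Complex.I * (ω : ℂ)) (a : ℝ) (ha : a < 0)
    (z₁ z₂ z₁' z₁'' z₂' z₂'' : ℝ → ℂ)
    (hdz₁ : ∀ t ∈ Set.Ici (0 : ℝ), HasDerivWithinAt z₁ (z₁' t) (Set.Ici 0) t)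
    (hdz₁' : ∀ t ∈ Set.Ici (0 : ℝ), HasDerivWithinAt z₁' (z₁'' t) (Set.Ici 0) t)
    (hdz₂ : ∀ t ∈ Set.Ici (0 : ℝ), HasDerivWithinAt z₂ (z₂' t) (Set.Ici 0) t)
    (hdz₂' : ∀ t ∈ Set.Ici (0 : ℝ), HasDerivWithinAt z₂' (z₂'' t) (Set.Ici 0) t)
    (hcz₁' : ContinuousOn z₁' (Set.Ici 0)) (hcz₁'' : ContinuousOn z₁'' (Set.Ici 0))
    (hcz₂' : ContinuousOn z₂' (Set.Ici 0)) (hcz₂'' : ContinuousOn z₂'' (Set.Ici 0))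
    (hez₁ : ExpOrder z₁ a) (hez₁' : ExpOrder z₁' a)
    (hez₂ : ExpOrder z₂ a) (hez₂' : ExpOrder z₂' a) (hez₂'' : ExpOrder z₂'' a)
    (hinit₁ : z₁ 0 = 0) (hinit₂ : z₂ 0 = 0) (hinit₂' : z₂' 0 = 0)
    (hode : ∀ t ≥ (0 : ℝ),
      z₂'' t + (((c + ca) / m : ℝ) : ℂ) * z₂' t + ((k / m : ℝ) : ℂ) * z₂ t
        = ((c / m : ℝ) : ℂ) * z₁' t + ((k / m : ℝ) : ℂ) * z₁ t)
    (hL : laplace z₁ s ≠ 0) :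
    ‖laplace z₂ s / laplace z₁ s‖ < 1 := by
  subst hs
  have c1 : ContinuousOn z₁ (Set.Ici 0) := fun t ht => (hdz₁ t ht).continuousWithinAt
  have c2 : ContinuousOn z₂ (Set.Ici 0) := fun t ht => (hdz₂ t ht).continuousWithinAt
  have L1 := lap_deriv z₁ z₁' a ω ha hdz₁ hcz₁' hez₁ hez₁' hinit₁
  have L2 := lap_deriv z₂ z₂' a ω ha hdz₂ hcz₂' hez₂ hez₂' hinit₂
  have L3 := lap_deriv z₂' z₂'' a ω ha hdz₂' hcz₂'' hez₂' hez₂'' hinit₂'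
  have i1 := lap_integrable z₁ a ω ha c1 hez₁
  have i1' := lap_integrable z₁' a ω ha hcz₁' hez₁'
  have i2 := lap_integrable z₂ a ω ha c2 hez₂
  have i2' := lap_integrable z₂' a ω ha hcz₂' hez₂'
  have i2'' := lap_integrable z₂'' a ω ha hcz₂'' hez₂''
  have E : laplace z₂'' (Complex.I * (ω : ℂ))
      + (((c + ca) / m : ℝ) : ℂ) * laplace z₂' (Complex.I * (ω : ℂ))
      + ((k / m : ℝ) : ℂ) * laplace z₂ (Complex.I * (ω : ℂ))
      = ((c / m : ℝ) : ℂ) * laplace z₁' (Complex.I * (ω : ℂ))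
      + ((k / m : ℝ) : ℂ) * laplace z₁ (Complex.I * (ω : ℂ)) := by
    unfold laplace
    rw [← integral_const_mul, ← integral_const_mul, ← integral_const_mul, ← integral_const_mul,
      ← integral_add i2'' (i2'.const_mul _)]
    have i4 := i2''.add (i2'.const_mul (((c + ca) / m : ℝ) : ℂ))
    simp only [Pi.add_def] at i4
    rw [← integral_add i4 (i2.const_mul _),
      ← integral_add (i1'.const_mul _) (i1.const_mul _)]
    refine setIntegral_congr_fun measurableSet_Ioi fun t ht => ?_
    have := hode t (le_of_lt ht)
    linear_combination Complex.exp (-(Complex.I * (ω : ℂ) * t)) * this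
  rw [L3, L2, L1] at E
  generalize laplace z₁ (Complex.I * (ω : ℂ)) = A at *
  generalize laplace z₂ (Complex.I * (ω : ℂ)) = B at *
  have E2 : (⟨k / m - ω ^ 2, ω * ((c + ca) / m)⟩ : ℂ) * B = (⟨k / m, ω * (c / m)⟩ : ℂ) * A := by
    rw [Complex.mk_eq_add_mul_I, Complex.mk_eq_add_mul_I]
    push_cast at E ⊢
    linear_combination E - (ω : ℂ) ^ 2 * B * Complex.I_sq
  have E3 := congrArg Complex.normSq E2
  rw [Complex.normSq_mul, Complex.normSq_mul,
    Complex.normSq_mk (k / m - ω ^ 2), Complex.normSq_mk (k / m)] at E3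
  have hA : 0 < Complex.normSq A := Complex.normSq_pos.2 hL
  have hlt : k / m * (k / m) + ω * (c / m) * (ω * (c / m)) <
      (k / m - ω ^ 2) * (k / m - ω ^ 2) + ω * ((c + ca) / m) * (ω * ((c + ca) / m)) := by
    have h := mul_pos (pow_pos hω 2) (sub_pos.2 hfreq)
    rw [← sub_pos]
    refine lt_of_lt_of_eq h ?_
    field_simp
    ring
  have hN : 0 ≤ k / m * (k / m) + ω * (c / m) * (ω * (c / m)) := by positivity
  have hBA : Complex.normSq B < Complex.normSq A := by
    by_contra! hh
    have hB := lt_of_lt_of_le hA hh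
    have := mul_lt_mul_of_pos_right hlt hB
    have := mul_le_mul_of_nonneg_left hh hN
    linarith
  rw [norm_div, div_lt_one (norm_pos_iff.2 hL)]
  rw [Complex.normSq_eq_norm_sq, Complex.normSq_eq_norm_sq] at hBA
  exact lt_of_pow_lt_pow_left₀ 2 (norm_nonneg _) hBA
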